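/- arXiv:2205.00881 — 13 statements merged into one kernel-verified Lean document; each statement's English description precedes it below -/
import Mathlib

section
/- For |A| = 3, majority dynamics does not preserve the identity of the Condorcet winner: there exist a profile P over 3 alternatives whose Condorcet winner is some alternative a, and an update order σ, such that the Condorcet winner of MD_σ(P) exists and is different from a. -/
attribute [local instance] Classical.propDecidable

noncomputable section

/-- A preference over the set of alternatives `A`: a binary relation. -/
abbrev Pref (A : Type) := A → A → Prop

/-- A preference is a strict partial order: irreflexive and transitive. -/
def IsPref {A : Type} (pref : Pref A) : Prop :=
  Irreflexive pref ∧ Transitive pref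

variable {A : Type} [Fintype A] [DecidableEq A]

/-- The support `n_P(ab)`: the number of agents preferring `a` to `b` in profile `P`. -/
def support {n : ℕ} (P : Fin n → Pref A) (a b : A) : ℕ :=
  (Finset.univ.filter fun i => P i a b).card

/-- An update order: a list of ordered pairs of distinct alternatives containing,
for each unordered pair `{a, b}` of distinct alternatives, exactly one of `ab` or `ba`,
each exactly once. -/
def IsUpdateOrder (σ : List (A × A)) : Prop :=
  (∀ p ∈ σ, p.1 ≠ p.2) ∧
  (∀ a b : A, a ≠ b → σ.count (a, b) + σ.count (b, a) = 1)

/-- One step of majority dynamics, discussing the pair `p`: agents already ranking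
`p.1` versus `p.2` keep their preference; every other agent adds `p.1 ≻ p.2` if
`n_P(p.1 p.2) ≥ n_P(p.2 p.1)` (ties broken in favour of the first alternative of the
pair), and otherwise adds `p.2 ≻ p.1`, then takes the transitive closure. -/
def mdStep {n : ℕ} (P : Fin n → Pref A) (p : A × A) : Fin n → Pref A :=
  fun i =>
    if P i p.1 p.2 ∨ P i p.2 p.1 then P i
    else if support P p.2 p.1 ≤ support P p.1 p.2 then
      Relation.TransGen (fun x y => P i x y ∨ (x = p.1 ∧ y = p.2))
    else
      Relation.TransGen (fun x y => P i x y ∨ (x = p.2 ∧ y = p.1))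

/-- Majority dynamics `MD_σ(P)`: process the pairs of the update order `σ` in order. -/
def MD {n : ℕ} (σ : List (A × A)) (P : Fin n → Pref A) : Fin n → Pref A :=
  σ.foldl mdStep P

/-- `a` is a Condorcet winner in `P`. -/
def CondorcetWinner {n : ℕ} (P : Fin n → Pref A) (a : A) : Prop :=
  ∀ b, b ≠ a → support P b a < support P a b

/-- `a` is a Condorcet loser in `P`. -/
def CondorcetLoser {n : ℕ} (P : Fin n → Pref A) (a : A) : Prop :=
  ∀ b, b ≠ a → support P a b < support P b a

/-- `a` is undominated in a preference. -/
def Undominated {A : Type} (pref : Pref A) (a : A) : Prop := ∀ b, ¬ pref b a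

/-- `a` is dominant in a preference. -/
def Dominant {A : Type} (pref : Pref A) (a : A) : Prop := ∀ b, b ≠ a → pref a b

/-- `a` is dominated (by every other alternative) in a preference. -/
def DominatedIn {A : Type} (pref : Pref A) (a : A) : Prop := ∀ b, b ≠ a → pref b a

/-- Number of preferences of `P` in which `a` is undominated. -/
def udCount {n : ℕ} (P : Fin n → Pref A) (a : A) : ℕ :=
  (Finset.univ.filter fun i => Undominated (P i) a).card

/-- Number of preferences of `P` in which `a` is dominant. -/
def domCount {n : ℕ} (P : Fin n → Pref A) (a : A) : ℕ :=
  (Finset.univ.filter fun i => Dominant (P i) a).card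

/-- Number of preferences of `P` in which `a` is dominated. -/
def domdCount {n : ℕ} (P : Fin n → Pref A) (a : A) : ℕ :=
  (Finset.univ.filter fun i => DominatedIn (P i) a).card

/-- `a` is undominated in at least one preference and no alternative is undominated
in strictly more preferences than `a`. -/
def PlurUDTop {n : ℕ} (P : Fin n → Pref A) (a : A) : Prop :=
  0 < udCount P a ∧ ∀ b, udCount P b ≤ udCount P a

/-- `a` is the PlurUD-consensus alternative of `P`. -/
def PlurUDConsensus {n : ℕ} (P : Fin n → Pref A) (a : A) : Prop :=
  PlurUDTop P a ∧ ∀ b, PlurUDTop P b → b = a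

/-- `a` is dominant in at least one preference and no alternative is dominant
in strictly more preferences than `a`. -/
def PlurDomTop {n : ℕ} (P : Fin n → Pref A) (a : A) : Prop :=
  0 < domCount P a ∧ ∀ b, domCount P b ≤ domCount P a

/-- `a` is the PlurDom-consensus alternative of `P`. -/
def PlurDomConsensus {n : ℕ} (P : Fin n → Pref A) (a : A) : Prop :=
  PlurDomTop P a ∧ ∀ b, PlurDomTop P b → b = a

/-- `a` is dominated in at least one preference and no alternative is dominated
in strictly more preferences than `a`. -/
def PlurDomdTop {n : ℕ} (P : Fin n → Pref A) (a : A) : Prop :=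
  0 < domdCount P a ∧ ∀ b, domdCount P b ≤ domdCount P a

/-- `a` is the (unique) plurality dominated alternative of `P`. -/
def PlurDomdConsensus {n : ℕ} (P : Fin n → Pref A) (a : A) : Prop :=
  PlurDomdTop P a ∧ ∀ b, PlurDomdTop P b → b = a

/-- `a` is the MajUD-consensus alternative of `P`: undominated in strictly more than
`n / 2` of the preferences, and the unique alternative with this property. -/
def MajUDConsensus {n : ℕ} (P : Fin n → Pref A) (a : A) : Prop :=
  (n < 2 * udCount P a) ∧ ∀ b, n < 2 * udCount P b → b = a

/-- `a` is the MajDom-consensus alternative of `P`: dominant in strictly more than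
`n / 2` of the preferences (such an alternative is automatically unique). -/
def MajDomConsensus {n : ℕ} (P : Fin n → Pref A) (a : A) : Prop :=
  n < 2 * domCount P a

/-- `a` is the UnanUD-consensus alternative of `P`: undominated in every preference,
and the unique alternative with this property. -/
def UnanUDConsensus {n : ℕ} (P : Fin n → Pref A) (a : A) : Prop :=
  (∀ i, Undominated (P i) a) ∧ ∀ b, (∀ i, Undominated (P i) b) → b = a

/-- `a` is the UnanDom-consensus alternative of `P`: dominant in every preference. -/
def UnanDomConsensus {n : ℕ} (P : Fin n → Pref A) (a : A) : Prop :=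
  ∀ i, Dominant (P i) a

/-- A preference is a strict weak ordering: there is an ordered partition of the
alternatives into levels (given by a level function `f`) such that alternatives in the
same level are incomparable, and `a ≻ b` exactly when `a` is in an earlier level. -/
def IsSWO (pref : Pref A) : Prop :=
  ∃ (k : ℕ) (f : A → Fin k), ∀ a b : A, pref a b ↔ f a < f b

def toP {n : ℕ} (Q : Fin n → Fin 3 → Fin 3 → Bool) : Fin n → Pref (Fin 3) :=
  fun i a b => Q i a b = true

def supB {n : ℕ} (Q : Fin n → Fin 3 → Fin 3 → Bool) (a b : Fin 3) : ℕ :=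
  ((List.finRange n).filter fun i => Q i a b).length

def addB (R : Fin 3 → Fin 3 → Bool) (p q : Fin 3) : Fin 3 → Fin 3 → Bool :=
  fun x y => R x y || ((x == p || R x p) && (y == q || R q y))

def stepB {n : ℕ} (Q : Fin n → Fin 3 → Fin 3 → Bool) (p : Fin 3 × Fin 3) :
    Fin n → Fin 3 → Fin 3 → Bool :=
  fun i => bif Q i p.1 p.2 || Q i p.2 p.1 then Q i
    else bif Nat.ble (supB Q p.2 p.1) (supB Q p.1 p.2) then addB (Q i) p.1 p.2
    else addB (Q i) p.2 p.1

theorem support_toP {n : ℕ} (Q : Fin n → Fin 3 → Fin 3 → Bool) (a b : Fin 3) :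
    support (toP Q) a b = supB Q a b := by
  have hnd : ((List.finRange n).filter fun i => Q i a b).Nodup :=
    (List.nodup_finRange n).filter _
  rw [supB, ← List.toFinset_card_of_nodup hnd, support]
  congr 1
  ext i
  rw [Finset.mem_filter]
  simp [toP]

theorem transGen_addB (R : Fin 3 → Fin 3 → Bool)
    (hR : ∀ x y z, R x y = true → R y z = true → R x z = true) (p q : Fin 3) :
    Relation.TransGen (fun x y => R x y = true ∨ (x = p ∧ y = q)) =
      fun x y => addB R p q x y = true := by
  funext x y
  apply propext
  constructor
  · intro h
    induction h with
    | single h =>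
      simp only [addB, Bool.or_eq_true, Bool.and_eq_true, beq_iff_eq]
      tauto
    | tail _ h ih =>
      simp only [addB, Bool.or_eq_true, Bool.and_eq_true, beq_iff_eq] at ih ⊢
      grind
  · intro h
    simp only [addB, Bool.or_eq_true, Bool.and_eq_true, beq_iff_eq] at h
    rcases h with h | ⟨h1, h2⟩
    · exact .single (Or.inl h)
    · have hpq : Relation.TransGen (fun x y => R x y = true ∨ (x = p ∧ y = q)) p q :=
        .single (Or.inr ⟨rfl, rfl⟩)
      have h3 : Relation.TransGen (fun x y => R x y = true ∨ (x = p ∧ y = q)) x q := by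
        rcases h1 with rfl | h1
        · exact hpq
        · exact .head (Or.inl h1) hpq
      rcases h2 with rfl | h2
      · exact h3
      · exact h3.tail (Or.inl h2)

theorem mdStep_toP {n : ℕ} (Q : Fin n → Fin 3 → Fin 3 → Bool)
    (hQ : ∀ i x y z, Q i x y = true → Q i y z = true → Q i x z = true)
    (p : Fin 3 × Fin 3) : mdStep (toP Q) p = toP (stepB Q p) := by
  funext i
  have e0 : toP (stepB Q p) i = fun x y => stepB Q p i x y = true := rfl
  simp only [mdStep, support_toP]
  rw [e0]
  have e1 := transGen_addB (Q i) (hQ i) p.1 p.2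
  have e2 := transGen_addB (Q i) (hQ i) p.2 p.1
  by_cases h : Q i p.1 p.2 = true ∨ Q i p.2 p.1 = true
  · rw [if_pos (show toP Q i p.1 p.2 ∨ toP Q i p.2 p.1 from h)]
    have : (Q i p.1 p.2 || Q i p.2 p.1) = true := by simpa using h
    simp only [stepB, this, cond_true]
    rfl
  · rw [if_neg (show ¬ (toP Q i p.1 p.2 ∨ toP Q i p.2 p.1) from h)]
    have : (Q i p.1 p.2 || Q i p.2 p.1) = false := by
      simpa using h
    simp only [stepB, this, cond_false]
    simp only [toP]
    by_cases h' : supB Q p.2 p.1 ≤ supB Q p.1 p.2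
    · rw [if_pos h', e1, Nat.ble_eq_true_of_le h', cond_true]
    · have : Nat.ble (supB Q p.2 p.1) (supB Q p.1 p.2) = false := by
        rw [← Bool.not_eq_true, Nat.ble_eq]; exact h'
      rw [if_neg h', e2, this, cond_false]

/-- Agents: `0 ≻ 1`; `1 ≻ 0`; `0 ≻ 1, 0 ≻ 2`. -/
def Q0 : Fin 3 → Fin 3 → Fin 3 → Bool :=
  ![![![false, true, false], ![false, false, false], ![false, false, false]],
    ![![false, false, false], ![true, false, false], ![false, false, false]],
    ![![false, true, true], ![false, false, false], ![false, false, false]]]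

theorem cw_toP {n : ℕ} (Q : Fin n → Fin 3 → Fin 3 → Bool) (a : Fin 3)
    (h : ∀ b, b ≠ a → supB Q b a < supB Q a b) : CondorcetWinner (toP Q) a := by
  intro b hb
  rw [support_toP, support_toP]
  exact h b hb

/-- For `|A| = 3`, majority dynamics does not preserve the identity of
the Condorcet winner. -/
theorem stmt_1 :
    ∃ (n : ℕ) (P : Fin n → Pref (Fin 3)) (a : Fin 3)
      (σ : List (Fin 3 × Fin 3)) (b : Fin 3),
      (∀ i, IsPref (P i)) ∧ CondorcetWinner P a ∧ IsUpdateOrder σ ∧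
      CondorcetWinner (MD σ P) b ∧ b ≠ a := by
  have t0 : ∀ i x y z, Q0 i x y = true → Q0 i y z = true → Q0 i x z = true := by
    decide +kernel
  have t1 : ∀ i x y z, stepB Q0 (0, 1) i x y = true → stepB Q0 (0, 1) i y z = true →
      stepB Q0 (0, 1) i x z = true := by
    decide +kernel
  have t2 : ∀ i x y z, stepB (stepB Q0 (0, 1)) (2, 1) i x y = true →
      stepB (stepB Q0 (0, 1)) (2, 1) i y z = true →
      stepB (stepB Q0 (0, 1)) (2, 1) i x z = true := by
    decide +kernel
  refine ⟨3, toP Q0, 0, [(0, 1), (2, 1), (2, 0)], 2, ?_, ?_, ⟨?_, ?_⟩, ?_, by simp⟩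
  · intro i
    refine ⟨?_, fun x y z => t0 i x y z⟩
    have : ∀ i x, ¬ Q0 i x x = true := by decide +kernel
    exact this i
  · apply cw_toP
    decide +kernel
  · simp
  · intro a b hab
    fin_cases a <;> fin_cases b <;> simp at hab ⊢
  · have : MD [(0, 1), (2, 1), (2, 0)] (toP Q0) =
        toP (stepB (stepB (stepB Q0 (0, 1)) (2, 1)) (2, 0)) := by
      simp only [MD, List.foldl_cons, List.foldl_nil]
      rw [mdStep_toP _ t0, mdStep_toP _ t1, mdStep_toP _ t2]
    rw [this]
    apply cw_toP
    decide +kernel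

end
end

section
/- For every m > 3 there exist a profile P over m alternatives that has a Condorcet winner, and an update order σ, such that MD_σ(P) has no Condorcet winner. -/
attribute [local instance] Classical.propDecidable

noncomputable section

variable {A : Type} [Fintype A] [DecidableEq A]

lemma tg_aux {A : Type} {R : Pref A} (hR : IsPref R) {u v x y : A}
    (h : Relation.TransGen (fun x y => R x y ∨ (x = u ∧ y = v)) x y) :
    R x y ∨ ((x = u ∨ R x u) ∧ (y = v ∨ R v y)) := by
  have ht : ∀ {a b c}, R a b → R b c → R a c := fun h1 h2 => hR.2 h1 h2
  induction h with
  | single h => grind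
  | tail _ h ih => grind

lemma tg_pref {A : Type} {R : Pref A} (hR : IsPref R) {u v : A} (huv : u ≠ v) (h : ¬ R v u) :
    IsPref (Relation.TransGen (fun x y => R x y ∨ (x = u ∧ y = v))) := by
  have ht : ∀ {a b c}, R a b → R b c → R a c := fun h1 h2 => hR.2 h1 h2
  have hi : ∀ a, ¬ R a a := fun a => hR.1 a
  refine ⟨fun x hx => ?_, fun _ _ _ h1 h2 => h1.trans h2⟩
  have := tg_aux hR hx
  grind

lemma step_pref {A : Type} {n : ℕ} {P : Fin n → Pref A} (hP : ∀ i, IsPref (P i))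
    {p : A × A} (hp : p.1 ≠ p.2) (i : Fin n) : IsPref (mdStep P p i) := by
  unfold mdStep
  split_ifs with h1 h2
  · exact hP i
  · exact tg_pref (hP i) hp (by tauto)
  · exact tg_pref (hP i) hp.symm (by tauto)

lemma step_mono {A : Type} {n : ℕ} {P : Fin n → Pref A}
    {p : A × A} {i : Fin n} {x y : A} (h : P i x y) : mdStep P p i x y := by
  unfold mdStep
  split_ifs with h1 h2
  · exact h
  · exact .single (.inl h)
  · exact .single (.inl h)

lemma step_add {A : Type} {n : ℕ} {P : Fin n → Pref A}
    {u v : A} {i : Fin n} (h : ¬ P i v u) (hs : support P v u ≤ support P u v) :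
    mdStep P (u, v) i u v := by
  unfold mdStep
  split_ifs with h1
  · simp at h1; tauto
  · exact .single (.inr ⟨rfl, rfl⟩)

lemma MD_pref {A : Type} {n : ℕ} (σ : List (A × A)) : ∀ {P : Fin n → Pref A},
    (∀ i, IsPref (P i)) → (∀ p ∈ σ, p.1 ≠ p.2) → ∀ i, IsPref (MD σ P i) := by
  induction σ with
  | nil => intro P hP _; exact hP
  | cons p σ ih =>
    intro P hP hσ
    exact ih (P := mdStep P p) (step_pref hP (hσ p (by simp))) (fun q hq => hσ q (by simp [hq]))

lemma MD_mono {A : Type} {n : ℕ} (σ : List (A × A)) : ∀ {P : Fin n → Pref A}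
    {i : Fin n} {x y : A}, P i x y → MD σ P i x y := by
  induction σ with
  | nil => intro P i x y h; exact h
  | cons p σ ih => intro P i x y h; exact ih (P := mdStep P p) (step_mono h)

lemma not_win {A : Type} {P : Fin 4 → Pref A} (hP : ∀ i, IsPref (P i)) {u v : A} (huv : u ≠ v)
    {i j : Fin 4} (hij : i ≠ j) (hi : P i u v) (hj : P j u v) : ¬ CondorcetWinner P v := by
  intro h
  have h := h u huv
  have as : ∀ i, P i u v → ¬ P i v u := fun i h1 h2 => (hP i).1 u ((hP i).2 h1 h2)
  have h1 : 2 ≤ support P u v := by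
    rw [← Finset.card_pair hij]
    apply Finset.card_le_card
    intro k hk
    simp at hk ⊢
    rcases hk with rfl | rfl <;> assumption
  have h2 : support P u v + support P v u ≤ 4 := by
    unfold support
    rw [← Finset.card_union_of_disjoint]
    · exact (Finset.card_le_univ _).trans (by simp)
    · rw [Finset.disjoint_filter]
      intro k _ hk
      exact as k hk
  omega

def exE (i : Fin 4) (x y : ℕ) : Prop :=
  (x < 4 ∧ 4 ≤ y) ∨
  (i = 0 ∧ ((x = 0 ∧ y = 2) ∨ (x = 3 ∧ y = 1))) ∨
  (i = 1 ∧ ((x = 2 ∧ y = 0) ∨ (x = 1 ∧ y = 3))) ∨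
  (i = 2 ∧ ((x = 1 ∧ (y = 0 ∨ y = 2 ∨ y = 3)) ∨ (x = 2 ∧ y = 0))) ∨
  (i = 3 ∧ (x = 0 ∧ y = 2))

lemma exE_pref {m : ℕ} (i : Fin 4) : IsPref (fun x y : Fin m => exE i x y) := by
  constructor
  · intro x h; unfold exE at h; omega
  · intro x y z h1 h2
    simp only [exE] at *
    generalize (x : ℕ) = x at *
    generalize (y : ℕ) = y at *
    generalize (z : ℕ) = z at *
    fin_cases i <;> simp at h1 h2 ⊢ <;> omega

lemma support_four {A : Type} (P : Fin 4 → Pref A) (a b : A) : support P a b =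
    (if P 0 a b then 1 else 0) + (if P 1 a b then 1 else 0) + (if P 2 a b then 1 else 0)
    + (if P 3 a b then 1 else 0) := by
  unfold support
  rw [Finset.card_filter, Fin.sum_univ_four]

/-- For every `m > 3` there exist a profile over `m` alternatives with a
Condorcet winner and an update order `σ` such that `MD_σ(P)` has no Condorcet winner. -/
theorem stmt_2 (m : ℕ) (hm : 3 < m) :
    ∃ (n : ℕ) (P : Fin n → Pref (Fin m)) (σ : List (Fin m × Fin m)),
      (∀ i, IsPref (P i)) ∧ (∃ a, CondorcetWinner P a) ∧ IsUpdateOrder σ ∧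
      ∀ b, ¬ CondorcetWinner (MD σ P) b := by
  obtain ⟨k, rfl⟩ : ∃ k, m = k + 4 := ⟨m - 4, by omega⟩
  let b : Fin (k + 4) := ⟨0, by omega⟩
  let a : Fin (k + 4) := ⟨1, by omega⟩
  let c : Fin (k + 4) := ⟨2, by omega⟩
  let d : Fin (k + 4) := ⟨3, by omega⟩
  let P : Fin 4 → Pref (Fin (k + 4)) := fun i x y => exE i x y
  let τ : List (Fin (k + 4) × Fin (k + 4)) :=
    (Finset.univ.filter fun p : Fin (k + 4) × Fin (k + 4) =>
      p.1 < p.2 ∧ p ≠ (c, d) ∧ p ≠ (b, a)).toList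
  have hP : ∀ i, IsPref (P i) := fun i => exE_pref i
  have hmem : ∀ p, p ∈ (c, d) :: (b, a) :: τ ↔ p.1 < p.2 := by
    intro p
    have h1 : c < d := by simp [c, d]
    have h2 : b < a := by simp [b, a]
    simp only [τ, List.mem_cons, Finset.mem_toList, Finset.mem_filter, Finset.mem_univ, true_and]
    constructor
    · rintro (rfl | rfl | h)
      · exact h1
      · exact h2
      · exact h.1
    · tauto
  have hnd : ((c, d) :: (b, a) :: τ).Nodup := by
    have h0 : (c, d) ≠ (b, a) := by simp [c, b]
    refine List.nodup_cons.2 ⟨?_, List.nodup_cons.2 ⟨?_, Finset.nodup_toList _⟩⟩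
    · simp only [List.mem_cons, h0, false_or]
      simp [τ]
    · simp [τ]
  have hord : IsUpdateOrder ((c, d) :: (b, a) :: τ) := by
    refine ⟨fun p hp => ((hmem p).1 hp).ne, fun x y hxy => ?_⟩
    rcases lt_or_gt_of_ne hxy with h | h
    · rw [List.count_eq_one_of_mem hnd ((hmem _).2 h),
        List.count_eq_zero_of_not_mem (fun h' => lt_asymm h ((hmem _).1 h'))]
    · rw [List.count_eq_one_of_mem hnd ((hmem (y, x)).2 h),
        List.count_eq_zero_of_not_mem (a := (x, y)) (fun h' => lt_asymm h ((hmem _).1 h'))]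
  refine ⟨4, P, (c, d) :: (b, a) :: τ, hP, ⟨a, ?_⟩, hord, ?_⟩
  · intro x hx
    rcases x with ⟨x, hx4⟩
    have hx1 : x ≠ 1 := fun h => hx (by simp [a, h])
    have : x = 0 ∨ x = 2 ∨ x = 3 ∨ 4 ≤ x := by omega
    rcases this with rfl | rfl | rfl | h
    · simp [support_four, P, a, exE]
    · simp [support_four, P, a, exE]
    · simp [support_four, P, a, exE]
    · have h4 : ¬ x < 4 := by omega
      have : x ≠ 0 ∧ x ≠ 2 ∧ x ≠ 3 := by omega
      simp [support_four, P, a, exE, h, h4, this]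
  · have hfin := MD_pref ((c, d) :: (b, a) :: τ) hP hord.1
    have hcd : ∀ i, mdStep P (c, d) i c d := by
      intro i
      apply step_add
      · simp [P, c, d, exE]
      · simp [support_four, P, c, d, exE]
    have hne1 : c ≠ d := by simp [c, d]
    have hne2 : b ≠ a := by simp [a, b]
    have hP1 : ∀ i, IsPref (mdStep P (c, d) i) := step_pref hP hne1
    have hba0 : mdStep P (c, d) 0 b a := by
      have h1 : mdStep P (c, d) 0 b c := step_mono (by simp [P, b, c, exE])
      have h2 : mdStep P (c, d) 0 d a := step_mono (by simp [P, d, a, exE])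
      exact (hP1 0).2 ((hP1 0).2 h1 (hcd 0)) h2
    have hab0 : ¬ mdStep P (c, d) 0 a b := fun h => (hP1 0).1 _ ((hP1 0).2 h hba0)
    have hup : ∀ i, i = 1 ∨ i = 3 → ¬ mdStep P (c, d) i a b := by
      intro i hi h
      unfold mdStep at h
      have hs : support P d c ≤ support P c d := by simp [support_four, P, c, d, exE]
      have hn : ¬ (P i c d ∨ P i d c) := by simp [P, c, d, exE]
      simp only [hn, hs, if_true, if_false] at h
      have := tg_aux (hP i) h
      rcases hi with rfl | rfl <;> simp [P, a, b, c, d, exE] at this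
    have hba1 : mdStep (mdStep P (c, d)) (b, a) 1 b a := by
      apply step_add (hup 1 (by simp))
      rw [support_four, support_four]
      simp only [hab0, hup 1 (by simp), hup 3 (by simp), hba0, if_true, if_false]
      split_ifs <;> omega
    have hF0 : ∀ i x y, P i x y → MD ((c, d) :: (b, a) :: τ) P i x y :=
      fun i x y h => MD_mono _ h
    have hF1 : ∀ i x y, mdStep P (c, d) i x y → MD ((c, d) :: (b, a) :: τ) P i x y :=
      fun i x y h => MD_mono ((b, a) :: τ) h
    have hF2 : ∀ i x y, mdStep (mdStep P (c, d)) (b, a) i x y →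
      MD ((c, d) :: (b, a) :: τ) P i x y := fun i x y h => MD_mono τ h
    rintro ⟨x, hx4⟩
    have : x = 0 ∨ x = 1 ∨ x = 2 ∨ x = 3 ∨ 4 ≤ x := by omega
    rcases this with rfl | rfl | rfl | rfl | h
    · exact not_win hfin (u := c) (i := 1) (j := 2) (by simp [c]) (by decide)
        (hF0 _ _ _ (by simp [P, c, exE])) (hF0 _ _ _ (by simp [P, c, exE]))
    · exact not_win hfin (u := b) (i := 0) (j := 1) (by simp [b]) (by decide)
        (hF1 _ _ _ hba0) (hF2 _ _ _ hba1)
    · exact not_win hfin (u := b) (i := 0) (j := 3) (by simp [b]) (by decide)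
        (hF0 _ _ _ (by simp [P, b, exE])) (hF0 _ _ _ (by simp [P, b, exE]))
    · exact not_win hfin (u := c) (i := 0) (j := 1) (by simp [c]) (by decide)
        (hF1 _ _ _ (hcd 0)) (hF1 _ _ _ (hcd 1))
    · exact not_win hfin (u := a) (i := 0) (j := 1) (by simp [a]; omega) (by decide)
        (hF0 _ _ _ (by simp [P, a, exE, h])) (hF0 _ _ _ (by simp [P, a, exE, h]))

end
end

section
/- Majority dynamics does not preserve PlurUD-consensus existence: there exist a profile P (over at least 3 alternatives) that has a PlurUD-consensus alternative, and an update order σ, such that MD_σ(P) has no PlurUD-consensus alternative. -/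
attribute [local instance] Classical.propDecidable

noncomputable section

variable {A : Type} [Fintype A] [DecidableEq A]

def exP : Fin 2 → Pref (Fin 3) := fun i x y =>
  (i = 0 ∧ x = 0 ∧ y = 1) ∨ (i = 1 ∧ x = 1 ∧ y = 2)

def exQ : Fin 2 → Pref (Fin 3) := fun i x y =>
  (i = 0 ∧ ((x = 2 ∧ y = 0) ∨ (x = 2 ∧ y = 1) ∨ (x = 0 ∧ y = 1))) ∨
  (i = 1 ∧ ((x = 1 ∧ y = 2) ∨ (x = 1 ∧ y = 0) ∨ (x = 2 ∧ y = 0)))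

theorem exQ_trans (i : Fin 2) : Transitive (exQ i) := by
  have h : ∀ i x y z, exQ i x y → exQ i y z → exQ i x z := by
    unfold exQ; intro i x y z; omega
  exact fun x y z => h i x y z

theorem ex_step1 : mdStep exP (2, 0) = exQ := by
  have h0 : ∀ i, ¬ (exP i 2 0 ∨ exP i 0 2) := by unfold exP; decide
  have h1 : support exP 0 2 ≤ support exP 2 0 := by
    have : support exP 0 2 = 0 := by
      unfold support
      rw [Finset.card_eq_zero, Finset.filter_eq_empty_iff]
      intro i _ h
      exact h0 i (Or.inr h)
    omega
  funext i
  have : mdStep exP (2, 0) i =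
      Relation.TransGen (fun x y => exP i x y ∨ (x = 2 ∧ y = 0)) := by
    unfold mdStep
    rw [if_neg (h0 i), if_pos h1]
  rw [this]
  funext x y
  apply propext
  constructor
  · intro h
    have hs : ∀ i x y, (exP i x y ∨ (x = 2 ∧ y = 0)) → exQ i x y := by
      unfold exP exQ; decide
    induction h with
    | single h => exact hs _ _ _ h
    | tail _ h ih => exact exQ_trans i ih (hs _ _ _ h)
  · intro h
    have hs : ∀ i x y, exQ i x y → (exP i x y ∨ (x = 2 ∧ y = 0)) ∨
        ∃ z, (exP i x z ∨ (x = 2 ∧ z = 0)) ∧ (exP i z y ∨ (z = 2 ∧ y = 0)) := by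
      unfold exP exQ; intro i x y
      fin_cases i <;> fin_cases x <;> fin_cases y <;> simp
    rcases hs i x y h with h | ⟨z, h, h'⟩
    · exact .single h
    · exact .tail (.single h) h'

theorem ex_step2 (p : Fin 3 × Fin 3) (hp : p.1 ≠ p.2) : mdStep exQ p = exQ := by
  have h : ∀ i (x y : Fin 3), x ≠ y → exQ i x y ∨ exQ i y x := by unfold exQ; decide
  funext i
  unfold mdStep
  rw [if_pos (h i _ _ hp)]

theorem ex_MD : MD [((2 : Fin 3), (0 : Fin 3)), (0, 1), (1, 2)] exP = exQ := by
  unfold MD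
  simp only [List.foldl_cons, List.foldl_nil]
  rw [ex_step1, ex_step2 _ (by decide), ex_step2 _ (by decide)]

theorem exP_count (a : Fin 3) : udCount exP a = if a = 0 then 2 else 1 := by
  unfold udCount
  rw [Finset.card_filter, Fin.sum_univ_two]
  fin_cases a <;> simp [Undominated, exP]

theorem exQ_count (a : Fin 3) : udCount exQ a = if a = 0 then 0 else 1 := by
  unfold udCount
  rw [Finset.card_filter, Fin.sum_univ_two]
  fin_cases a <;> simp [Undominated, exQ, Fin.exists_fin_succ]

/-- Majority dynamics does not preserve PlurUD-consensus existence. -/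
theorem stmt_3 :
    ∃ (m n : ℕ) (P : Fin n → Pref (Fin m)) (a : Fin m) (σ : List (Fin m × Fin m)),
      3 ≤ m ∧ (∀ i, IsPref (P i)) ∧ PlurUDConsensus P a ∧ IsUpdateOrder σ ∧
      ∀ b, ¬ PlurUDConsensus (MD σ P) b := by
  refine ⟨3, 2, exP, 0, [(2, 0), (0, 1), (1, 2)], le_refl _, ?_, ?_, ?_, ?_⟩
  · intro i
    constructor
    · have h : ∀ i x, ¬ exP i x x := by unfold exP; decide
      exact fun x => h i x
    · have h : ∀ i x y z, exP i x y → exP i y z → exP i x z := by unfold exP; decide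
      exact fun x y z => h i x y z
  · unfold PlurUDConsensus PlurUDTop
    simp only [exP_count]
    decide
  · constructor
    · decide
    · decide
  · rw [ex_MD]
    unfold PlurUDConsensus PlurUDTop
    simp only [exQ_count]
    decide

end
end

section
/- Majority dynamics does not preserve PlurDom-consensus existence: there exist a profile P (over at least 3 alternatives) that has a PlurDom-consensus alternative, and an update order σ, such that MD_σ(P) has no PlurDom-consensus alternative. -/
attribute [local instance] Classical.propDecidable

noncomputable section

variable {A : Type} [Fintype A] [DecidableEq A]

def exQ0 : Fin 2 → Pref (Fin 3) := fun i x y => if i = 0 then x < y else (x = 1 ∧ y = 0)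

def exQ1 : Fin 2 → Pref (Fin 3) := fun i x y => if i = 0 then x < y else (x = 1 ∧ y ≠ 1)

def exQ2 : Fin 2 → Pref (Fin 3) :=
  fun i x y => if i = 0 then x < y else ((x = 1 ∧ y ≠ 1) ∨ (x = 0 ∧ y = 2))

lemma ex_transGen {r s : Fin 3 → Fin 3 → Prop} (h : ∀ x y, r x y ↔ s x y)
    (ht : ∀ x y z, s x y → s y z → s x z) : Relation.TransGen r = s := by
  have : r = s := by
    funext x y
    exact propext (h x y)
  subst this
  funext x y
  apply propext
  constructor
  · intro h1
    induction h1 with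
    | single h => exact h
    | tail _ h2 ih => exact ht _ _ _ ih h2
  · exact Relation.TransGen.single

lemma ex_step1_s6 : mdStep exQ0 (1, 2) = exQ1 := by
  have hs : support exQ0 2 1 = 0 := by
    simp [support, exQ0, Finset.card_filter, Fin.sum_univ_two]
  funext i
  fin_cases i
  · simp [mdStep, exQ0, exQ1]; funext x y; simp [exQ0, exQ1]
  · simp only [mdStep, hs]
    rw [if_neg (by simp [exQ0]), if_pos (Nat.zero_le _)]
    apply ex_transGen
    · simp only [exQ0, exQ1]; decide
    · simp only [exQ1]; decide

lemma ex_step2_s6 : mdStep exQ1 (0, 1) = exQ1 := by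
  funext i
  fin_cases i
  · simp [mdStep, exQ1]
  · simp [mdStep, exQ1]

lemma ex_step3 : mdStep exQ1 (0, 2) = exQ2 := by
  have hs : support exQ1 2 0 = 0 := by
    simp [support, exQ1, Finset.card_filter, Fin.sum_univ_two]
  funext i
  fin_cases i
  · simp [mdStep, exQ1, exQ2]; funext x y; simp [exQ1, exQ2]
  · simp only [mdStep, hs]
    rw [if_neg (by simp [exQ1]), if_pos (Nat.zero_le _)]
    apply ex_transGen
    · simp only [exQ1, exQ2]; decide
    · simp only [exQ2]; decide

lemma ex_domCount (P : Fin 2 → Pref (Fin 3)) (a : Fin 3) :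
    domCount P a = (if Dominant (P 0) a then 1 else 0) + (if Dominant (P 1) a then 1 else 0) := by
  rw [domCount, Finset.card_filter, Fin.sum_univ_two]

/-- Majority dynamics does not preserve PlurDom-consensus existence. -/
theorem stmt_6 :
    ∃ (m n : ℕ) (P : Fin n → Pref (Fin m)) (a : Fin m) (σ : List (Fin m × Fin m)),
      3 ≤ m ∧ (∀ i, IsPref (P i)) ∧ PlurDomConsensus P a ∧ IsUpdateOrder σ ∧
      ∀ b, ¬ PlurDomConsensus (MD σ P) b := by
  have hMD : MD [(1, 2), (0, 1), (0, 2)] exQ0 = exQ2 := by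
    simp [MD, ex_step1_s6, ex_step2_s6, ex_step3]
  have d0 : domCount exQ0 0 = 1 := by
    rw [ex_domCount, if_pos (by simp only [Dominant, exQ0]; decide),
      if_neg (by simp only [Dominant, exQ0]; decide)]
  have d1 : domCount exQ0 1 = 0 := by
    rw [ex_domCount, if_neg (by simp only [Dominant, exQ0]; decide),
      if_neg (by simp only [Dominant, exQ0]; decide)]
  have d2 : domCount exQ0 2 = 0 := by
    rw [ex_domCount, if_neg (by simp only [Dominant, exQ0]; decide),
      if_neg (by simp only [Dominant, exQ0]; decide)]
  have e0 : domCount exQ2 0 = 1 := by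
    rw [ex_domCount, if_pos (by simp only [Dominant, exQ2]; decide),
      if_neg (by simp only [Dominant, exQ2]; decide)]
  have e1 : domCount exQ2 1 = 1 := by
    rw [ex_domCount, if_neg (by simp only [Dominant, exQ2]; decide),
      if_pos (by simp only [Dominant, exQ2]; decide)]
  have e2 : domCount exQ2 2 = 0 := by
    rw [ex_domCount, if_neg (by simp only [Dominant, exQ2]; decide),
      if_neg (by simp only [Dominant, exQ2]; decide)]
  refine ⟨3, 2, exQ0, 0, [(1, 2), (0, 1), (0, 2)], le_refl _, ?_, ?_, ?_, ?_⟩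
  · intro i
    constructor
    · intro x
      revert i x
      simp only [exQ0]; decide
    · intro x y z
      revert i x y z
      simp only [exQ0]; decide
  · refine ⟨⟨by omega, ?_⟩, ?_⟩
    · intro b
      fin_cases b <;> simp [d0, d1, d2]
    · intro b hb
      have := hb.1
      fin_cases b
      · rfl
      · simp [d1] at this
      · simp [d2] at this
  · constructor
    · decide
    · intro a b
      fin_cases a <;> fin_cases b <;> simp [List.count_cons]
  · rw [hMD]
    intro b hb
    have t0 : PlurDomTop exQ2 0 := ⟨by omega, by intro b; fin_cases b <;> simp [e0, e1, e2]⟩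
    have t1 : PlurDomTop exQ2 1 := ⟨by omega, by intro b; fin_cases b <;> simp [e0, e1, e2]⟩
    have := (hb.2 0 t0).trans (hb.2 1 t1).symm
    exact absurd this (by decide)

end
end

section
/- Majority dynamics preserves UnanDom-consensus identity: if a is the UnanDom-consensus alternative of a profile P, then for every update order σ, a is the UnanDom-consensus alternative of MD_σ(P). -/
attribute [local instance] Classical.propDecidable

noncomputable section

variable {A : Type} [Fintype A] [DecidableEq A]

/-- Majority dynamics preserves UnanDom-consensus identity. -/
theorem stmt_7 {n : ℕ} (P : Fin n → Pref A) (hP : ∀ i, IsPref (P i))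
    (a : A) (ha : UnanDomConsensus P a)
    (σ : List (A × A)) (hσ : IsUpdateOrder σ) :
    UnanDomConsensus (MD σ P) a := by
  have step : ∀ (Q : Fin n → Pref A) (p : A × A), UnanDomConsensus Q a →
      UnanDomConsensus (mdStep Q p) a := by
    intro Q p hQ i b hb
    have h := hQ i b hb
    unfold mdStep
    split_ifs
    · exact h
    · exact Relation.TransGen.single (Or.inl h)
    · exact Relation.TransGen.single (Or.inl h)
  unfold MD
  clear hσ hP
  induction σ generalizing P with
  | nil => exact ha
  | cons p σ ih => exact ih (mdStep P p) (step P p ha)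

end
end

section
/- Majority dynamics preserves MajDom-consensus identity: if a is the MajDom-consensus alternative of a profile P, then for every update order σ, a is the MajDom-consensus alternative of MD_σ(P). -/
attribute [local instance] Classical.propDecidable

noncomputable section

variable {A : Type} [Fintype A] [DecidableEq A]

theorem mdStep_mono_aux {n : ℕ} (P : Fin n → Pref A) (p : A × A) (i : Fin n) (x y : A)
    (h : P i x y) : mdStep P p i x y := by
  unfold mdStep
  split_ifs
  · exact h
  · exact Relation.TransGen.single (Or.inl h)
  · exact Relation.TransGen.single (Or.inl h)

theorem MD_mono_aux {n : ℕ} (σ : List (A × A)) (P : Fin n → Pref A) (i : Fin n) (x y : A)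
    (h : P i x y) : MD σ P i x y := by
  induction σ generalizing P with
  | nil => exact h
  | cons p σ ih => exact ih (mdStep P p) (mdStep_mono_aux P p i x y h)

/-- Majority dynamics preserves MajDom-consensus identity. -/
theorem stmt_8 {n : ℕ} (P : Fin n → Pref A) (hP : ∀ i, IsPref (P i))
    (a : A) (ha : MajDomConsensus P a)
    (σ : List (A × A)) (hσ : IsUpdateOrder σ) :
    MajDomConsensus (MD σ P) a := by
  have h : domCount P a ≤ domCount (MD σ P) a := by
    unfold domCount
    apply Finset.card_le_card
    intro i hi
    rw [Finset.mem_filter] at hi ⊢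
    exact ⟨hi.1, fun b hb => MD_mono_aux σ P i a b (hi.2 b hb)⟩
  unfold MajDomConsensus at *
  omega

end
end

section
/- For every m ≥ 5 there exist a profile P over m alternatives that has a Condorcet winner and in which some alternative ℓ is a Condorcet loser, and an update order σ, such that ℓ is the Condorcet winner of MD_σ(P). -/
attribute [local instance] Classical.propDecidable

noncomputable section

variable {A : Type} [Fintype A] [DecidableEq A]

theorem aux_transGen {A : Type} {R : A → A → Prop} {a b : A} (hR : IsPref R) (hab : a ≠ b)
    (hn : ¬ R b a) : IsPref (Relation.TransGen (fun x y => R x y ∨ (x = a ∧ y = b))) := by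
  obtain ⟨hi, ht⟩ := hR
  have key : ∀ x y, Relation.TransGen (fun x y => R x y ∨ (x = a ∧ y = b)) x y →
      R x y ∨ ((x = a ∨ R x a) ∧ (y = b ∨ R b y)) := by
    intro x y h
    induction h with
    | single h => grind
    | tail _ h ih =>
      rename_i u v
      rcases ih with h1 | ⟨h1, h2⟩ <;> rcases h with h | ⟨h3, h4⟩
      · exact Or.inl (ht h1 h)
      · subst h3; exact Or.inr ⟨Or.inr h1, Or.inl h4⟩
      · refine Or.inr ⟨h1, Or.inr ?_⟩
        rcases h2 with h2 | h2
        · subst h2; exact h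
        · exact ht h2 h
      · exact Or.inr ⟨h1, Or.inl h4⟩
  refine ⟨?_, fun x y z h1 h2 => h1.trans h2⟩
  intro x hx
  rcases key x x hx with h | ⟨h1 | h1, h2 | h2⟩
  · exact hi x h
  · exact hab (h1.symm.trans h2)
  · subst h1; exact hn h2
  · subst h2; exact hn h1
  · exact hn (ht h2 h1)

theorem aux_pref {m n : ℕ} {P : Fin n → Pref (Fin m)} {p : Fin m × Fin m} (hp : p.1 ≠ p.2)
    (h : ∀ i, IsPref (P i)) : ∀ i, IsPref (mdStep P p i) := by
  intro i
  unfold mdStep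
  split_ifs with h1 h2
  · exact h i
  · exact aux_transGen (h i) hp (fun h => h1 (Or.inr h))
  · exact aux_transGen (h i) hp.symm (fun h => h1 (Or.inl h))

theorem aux_mono {m n : ℕ} {P : Fin n → Pref (Fin m)} {p : Fin m × Fin m} {i : Fin n}
    {a b : Fin m} (h : P i a b) : mdStep P p i a b := by
  unfold mdStep
  split_ifs with h1 h2
  · exact h
  · exact Relation.TransGen.single (Or.inl h)
  · exact Relation.TransGen.single (Or.inl h)

theorem aux_add {m n : ℕ} {P : Fin n → Pref (Fin m)} {a b : Fin m} {i : Fin n}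
    (h : ¬ P i b a) (hs : support P b a ≤ support P a b) : mdStep P (a, b) i a b := by
  unfold mdStep
  split_ifs with h1
  · rcases h1 with h1 | h1
    · exact h1
    · exact absurd h1 h
  · exact Relation.TransGen.single (Or.inr ⟨rfl, rfl⟩)

theorem aux_und {m n : ℕ} {P : Fin n → Pref (Fin m)} {a b l : Fin m} {i : Fin n}
    (h : Undominated (P i) l) (hl : l ≠ b) (hs : support P b a ≤ support P a b) :
    Undominated (mdStep P (a, b) i) l := by
  intro z
  unfold mdStep
  split_ifs with h1
  · exact h z
  · intro hz
    obtain ⟨c, -, hc⟩ := Relation.TransGen.tail'_iff.1 hz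
    rcases hc with hc | hc
    · exact h c hc
    · exact hl hc.2

theorem aux_MD_pref {m n : ℕ} (σ : List (Fin m × Fin m)) (hσ : ∀ p ∈ σ, p.1 ≠ p.2) :
    ∀ (P : Fin n → Pref (Fin m)), (∀ i, IsPref (P i)) → ∀ i, IsPref (MD σ P i) := by
  induction σ with
  | nil => intro P h; exact h
  | cons p σ ih =>
    intro P h
    exact ih (fun q hq => hσ q (List.mem_cons_of_mem _ hq)) (mdStep P p)
      (aux_pref (hσ p List.mem_cons_self) h)

theorem aux_MD_mono {m n : ℕ} (σ : List (Fin m × Fin m)) {i : Fin n} {a b : Fin m} :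
    ∀ (P : Fin n → Pref (Fin m)), P i a b → MD σ P i a b := by
  induction σ with
  | nil => intro P h; exact h
  | cons p σ ih => intro P h; exact ih (mdStep P p) (aux_mono h)

theorem aux_ge {m n : ℕ} {P : Fin n → Pref (Fin m)} {a b : Fin m} (S : Finset (Fin n))
    (h : ∀ i ∈ S, P i a b) : S.card ≤ support P a b :=
  Finset.card_le_card fun i hi => by simpa using h i hi

theorem aux_le {m n : ℕ} {P : Fin n → Pref (Fin m)} {a b : Fin m} (S : Finset (Fin n))
    (h : ∀ i, P i a b → i ∈ S) : support P a b ≤ S.card :=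
  Finset.card_le_card fun i hi => h i (by simpa using hi)

/-- The profile: alternatives `0 = l`, `1 = w`, `2 = x`, `3 = y`, and ten agents. -/
def auxP (m : ℕ) : Fin 10 → Pref (Fin m) := fun i a b =>
  (i.val < 2 ∧ ((b.val = 0 ∧ a.val ≠ 0) ∨ (a.val = 1 ∧ b.val ≠ 1) ∨ (a.val = 3 ∧ b.val = 2))) ∨
  (2 ≤ i.val ∧ i.val < 4 ∧ a.val = 3 ∧ b.val ≠ 0 ∧ b.val ≠ 3) ∨
  (4 ≤ i.val ∧ i.val < 8 ∧ ((a.val = 1 ∧ b.val ≠ 0 ∧ b.val ≠ 1) ∨ (a.val = 2 ∧ b.val = 3))) ∨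
  (i.val = 8 ∧ a.val = 0 ∧ b.val = 2) ∨
  (i.val = 9 ∧ a.val = 0 ∧ b.val = 3)

theorem auxP_pref (m : ℕ) (i : Fin 10) : IsPref (auxP m i) := by
  constructor
  · intro a h
    unfold auxP at h
    omega
  · intro a b c h1 h2
    unfold auxP at *
    rcases h1 with h1 | h1 | h1 | h1 | h1
    · left; omega
    · omega
    · right; right; left; omega
    · omega
    · omega

set_option maxHeartbeats 4000000 in
/-- For every `m ≥ 5`, majority dynamics can turn a Condorcet loser
into the Condorcet winner. -/
theorem stmt_9 (m : ℕ) (hm : 5 ≤ m) :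
    ∃ (n : ℕ) (P : Fin n → Pref (Fin m)) (w l : Fin m) (σ : List (Fin m × Fin m)),
      (∀ i, IsPref (P i)) ∧ CondorcetWinner P w ∧ CondorcetLoser P l ∧
      IsUpdateOrder σ ∧ CondorcetWinner (MD σ P) l := by
  obtain ⟨l, hl⟩ : ∃ l : Fin m, l.val = 0 := ⟨⟨0, by omega⟩, rfl⟩
  obtain ⟨w, hw⟩ : ∃ l : Fin m, l.val = 1 := ⟨⟨1, by omega⟩, rfl⟩
  obtain ⟨x, hx⟩ : ∃ l : Fin m, l.val = 2 := ⟨⟨2, by omega⟩, rfl⟩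
  obtain ⟨y, hy⟩ : ∃ l : Fin m, l.val = 3 := ⟨⟨3, by omega⟩, rfl⟩
  have hly : l ≠ y := by intro h; rw [h] at hl; omega
  have hlw : l ≠ w := by intro h; rw [h] at hl; omega
  have hxy : x ≠ y := by intro h; rw [h] at hx; omega
  let τ : List (Fin m × Fin m) := (Finset.univ.filter fun p : Fin m × Fin m =>
    p.1 < p.2 ∧ p ≠ (x, y) ∧ p ≠ (l, y) ∧ p ≠ (l, w)).toList
  let σ : List (Fin m × Fin m) := (x, y) :: (l, y) :: (l, w) :: τ
  have hmem : ∀ p, p ∈ σ ↔ p.1 < p.2 := by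
    intro p
    have h1 : x < y := by rw [Fin.lt_def]; omega
    have h2 : l < y := by rw [Fin.lt_def]; omega
    have h3 : l < w := by rw [Fin.lt_def]; omega
    simp only [σ, τ, List.mem_cons, Finset.mem_toList, Finset.mem_filter, Finset.mem_univ,
      true_and]
    constructor
    · rintro (rfl | rfl | rfl | h)
      exacts [h1, h2, h3, h.1]
    · intro h
      tauto
  have hnd : σ.Nodup := by
    have hlx : l ≠ x := by intro h; rw [h] at hl; omega
    have hyw : y ≠ w := by intro h; rw [h] at hy; omega
    simp only [σ, τ, List.nodup_cons, List.mem_cons, Finset.mem_toList, Finset.mem_filter,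
      Finset.nodup_toList, Prod.mk.injEq]
    grind
  have hσ : IsUpdateOrder σ := by
    refine ⟨fun p hp => ((hmem p).1 hp).ne, fun a b hab => ?_⟩
    rcases lt_or_gt_of_ne hab with h | h
    · rw [List.count_eq_one_of_mem hnd ((hmem (a, b)).2 h),
        List.count_eq_zero_of_not_mem (fun h' => absurd ((hmem (b, a)).1 h') h.not_gt)]
    · rw [List.count_eq_one_of_mem hnd ((hmem (b, a)).2 h),
        List.count_eq_zero_of_not_mem (fun h' => absurd ((hmem (a, b)).1 h') h.not_gt)]
  have hP0 := auxP_pref m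
  have hu0 : ∀ i : Fin 10, 2 ≤ i.val → Undominated (auxP m i) l := by
    intro i hi z h
    unfold auxP at h
    omega
  -- step 1
  have s1 : support (auxP m) y x ≤ support (auxP m) x y := by
    refine (aux_le {0, 1, 2, 3} ?_).trans (le_trans ?_ (aux_ge {4, 5, 6, 7} ?_))
    · intro i hi
      unfold auxP at hi
      have : i.val < 4 := by omega
      simp only [Finset.mem_insert, Finset.mem_singleton, Fin.ext_iff, Fin.coe_ofNat_eq_mod]; omega
    · decide
    · intro i hi
      unfold auxP
      simp only [Finset.mem_insert, Finset.mem_singleton, Fin.ext_iff, Fin.coe_ofNat_eq_mod] at hi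
      omega
  obtain ⟨P1, e1⟩ : ∃ P1, P1 = mdStep (auxP m) (x, y) := ⟨_, rfl⟩
  have hP1 : ∀ i, IsPref (P1 i) := by rw [e1]; exact aux_pref hxy hP0
  have hu1 : ∀ i : Fin 10, 2 ≤ i.val → Undominated (P1 i) l := by
    rw [e1]; exact fun i hi => aux_und (hu0 i hi) hly s1
  have s2 : support P1 y l ≤ support P1 l y := by
    refine (aux_le {0, 1} ?_).trans (le_trans ?_ (aux_ge {8, 9} ?_))
    · intro i hi
      by_contra hc
      simp only [Finset.mem_insert, Finset.mem_singleton, Fin.ext_iff, Fin.coe_ofNat_eq_mod] at hc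
      exact hu1 i (by omega) _ hi
    · decide
    · intro i hi
      simp only [Finset.mem_insert, Finset.mem_singleton, Fin.ext_iff, Fin.coe_ofNat_eq_mod] at hi
      rcases hi with hi | hi
      · have h1 : P1 i l x := by
          rw [e1]; apply aux_mono; unfold auxP; omega
        have h2 : P1 i x y := by
          rw [e1]; apply aux_add _ s1; unfold auxP; omega
        exact (hP1 i).2 h1 h2
      · rw [e1]; apply aux_mono; unfold auxP; omega
  obtain ⟨P2, e2⟩ : ∃ P2, P2 = mdStep P1 (l, y) := ⟨_, rfl⟩
  have hP2 : ∀ i, IsPref (P2 i) := by rw [e2]; exact aux_pref hly hP1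
  have hu2 : ∀ i : Fin 10, 2 ≤ i.val → Undominated (P2 i) l := by
    rw [e2]; exact fun i hi => aux_und (hu1 i hi) hly s2
  have hm2 : ∀ i a b, auxP m i a b → P2 i a b := by
    intro i a b h
    rw [e2, e1]; exact aux_mono (aux_mono h)
  have hy2 : ∀ i : Fin 10, 2 ≤ i.val → P2 i l y := by
    intro i hi
    rw [e2]; exact aux_add (hu1 i hi y) s2
  have hU2 : ∀ i : Fin 10, 2 ≤ i.val → i.val < 4 → ∀ b, b ≠ l → P2 i l b := by
    intro i hi hi' b hb
    by_cases hby : b = y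
    · rw [hby]; exact hy2 i hi
    · refine (hP2 i).2 (hy2 i hi) (hm2 _ _ _ ?_)
      rw [ne_eq, Fin.ext_iff] at hb; rw [Fin.ext_iff] at hby
      unfold auxP; omega
  have s3 : support P2 w l ≤ support P2 l w := by
    refine (aux_le {0, 1} ?_).trans (le_trans ?_ (aux_ge {2, 3} ?_))
    · intro i hi
      by_contra hc
      simp only [Finset.mem_insert, Finset.mem_singleton, Fin.ext_iff, Fin.coe_ofNat_eq_mod] at hc
      exact hu2 i (by omega) _ hi
    · decide
    · intro i hi
      simp only [Finset.mem_insert, Finset.mem_singleton, Fin.ext_iff, Fin.coe_ofNat_eq_mod] at hi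
      exact hU2 i (by omega) (by omega) w hlw.symm
  obtain ⟨P3, e3⟩ : ∃ P3, P3 = mdStep P2 (l, w) := ⟨_, rfl⟩
  have hP3 : ∀ i, IsPref (P3 i) := by rw [e3]; exact aux_pref hlw hP2
  have hD3 : ∀ i : Fin 10, 2 ≤ i.val → i.val < 8 → ∀ b, b ≠ l → P3 i l b := by
    intro i hi hi' b hb
    by_cases h4 : i.val < 4
    · rw [e3]; exact aux_mono (hU2 i hi h4 b hb)
    · have h1 : P3 i l w := by rw [e3]; exact aux_add (hu2 i hi w) s3
      by_cases hbw : b = w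
      · rw [hbw]; exact h1
      · refine (hP3 i).2 h1 ?_
        rw [e3]
        apply aux_mono
        apply hm2
        rw [ne_eq, Fin.ext_iff] at hb; rw [Fin.ext_iff] at hbw
        unfold auxP; omega
  have hfin : MD σ (auxP m) = MD τ P3 := by rw [e3, e2, e1]; rfl
  have hPf := aux_MD_pref σ hσ.1 (auxP m) hP0
  have hDf : ∀ i : Fin 10, 2 ≤ i.val → i.val < 8 → ∀ b, b ≠ l → MD σ (auxP m) i l b := by
    intro i hi hi' b hb
    rw [hfin]; exact aux_MD_mono τ P3 (hD3 i hi hi' b hb)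
  refine ⟨10, auxP m, w, l, σ, hP0, ?_, ?_, hσ, ?_⟩
  · intro b hb
    rw [ne_eq, Fin.ext_iff] at hb
    by_cases hbl : b = l
    · rw [hbl]
      refine (aux_le ∅ ?_).trans_lt (lt_of_lt_of_le ?_ (aux_ge {0, 1} ?_))
      · intro i hi; unfold auxP at hi; omega
      · decide
      · intro i hi; simp only [Finset.mem_insert, Finset.mem_singleton, Fin.ext_iff, Fin.coe_ofNat_eq_mod] at hi; unfold auxP; omega
    · rw [Fin.ext_iff] at hbl
      refine (aux_le {2, 3} ?_).trans_lt (lt_of_lt_of_le ?_ (aux_ge {0, 1, 4, 5, 6, 7} ?_))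
      · intro i hi; unfold auxP at hi; simp only [Finset.mem_insert, Finset.mem_singleton, Fin.ext_iff, Fin.coe_ofNat_eq_mod]; omega
      · decide
      · intro i hi; simp only [Finset.mem_insert, Finset.mem_singleton, Fin.ext_iff, Fin.coe_ofNat_eq_mod] at hi; unfold auxP; omega
  · intro b hb
    rw [ne_eq, Fin.ext_iff] at hb
    have h2 : 2 ≤ support (auxP m) b l := by
      refine le_trans (by decide) (aux_ge {0, 1} ?_)
      intro i hi; simp only [Finset.mem_insert, Finset.mem_singleton, Fin.ext_iff, Fin.coe_ofNat_eq_mod] at hi; unfold auxP; omega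
    refine lt_of_lt_of_le (Nat.lt_succ_of_le ?_) h2
    by_cases hb2 : b.val = 2
    · refine (aux_le {8} ?_).trans (by decide)
      intro i hi; unfold auxP at hi; simp only [Finset.mem_insert, Finset.mem_singleton, Fin.ext_iff, Fin.coe_ofNat_eq_mod]; omega
    · refine (aux_le {9} ?_).trans (by decide)
      intro i hi; unfold auxP at hi; simp only [Finset.mem_insert, Finset.mem_singleton, Fin.ext_iff, Fin.coe_ofNat_eq_mod]; omega
  · intro b hb
    refine (aux_le {0, 1, 8, 9} ?_).trans_lt (lt_of_lt_of_le ?_ (aux_ge {2, 3, 4, 5, 6, 7} ?_))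
    · intro i hi
      by_contra hc
      simp only [Finset.mem_insert, Finset.mem_singleton, Fin.ext_iff, Fin.coe_ofNat_eq_mod] at hc
      exact (hPf i).1 l ((hPf i).2 (hDf i (by omega) (by omega) b hb) hi)
    · decide
    · intro i hi
      simp only [Finset.mem_insert, Finset.mem_singleton, Fin.ext_iff, Fin.coe_ofNat_eq_mod] at hi
      exact hDf i (by omega) (by omega) b hb

end
end

section
/- A majority dominated alternative cannot become the majority dominant alternative: if alternative a is dominated in the preferences of strictly more than n/2 of the agents in a profile P, then for no update order σ is a the MajDom-consensus alternative of MD_σ(P). -/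
attribute [local instance] Classical.propDecidable

noncomputable section

variable {A : Type} [Fintype A] [DecidableEq A]

theorem transGen_add_aux {B : Type} (R : Pref B) (hR : Transitive R) (u v x y : B)
    (h : Relation.TransGen (fun x y => R x y ∨ (x = u ∧ y = v)) x y) :
    R x y ∨ ((x = u ∨ R x u) ∧ (y = v ∨ R v y)) := by
  induction h with
  | single h =>
    rcases h with h | ⟨h1, h2⟩
    · exact Or.inl h
    · exact Or.inr ⟨Or.inl h1, Or.inl h2⟩
  | tail _ h ih =>
    rcases h with h | ⟨rfl, rfl⟩
    · rcases ih with ih | ⟨h1, h2⟩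
      · exact Or.inl (hR ih h)
      · refine Or.inr ⟨h1, Or.inr ?_⟩
        rcases h2 with rfl | h2
        · exact h
        · exact hR h2 h
    · rcases ih with ih | ⟨h1, _⟩
      · exact Or.inr ⟨Or.inr ih, Or.inl rfl⟩
      · exact Or.inr ⟨h1, Or.inl rfl⟩

theorem isPref_add_aux {B : Type} (R : Pref B) (hR : IsPref R) (u v : B) (huv : u ≠ v)
    (hvu : ¬ R v u) :
    IsPref (Relation.TransGen (fun x y => R x y ∨ (x = u ∧ y = v))) := by
  refine ⟨?_, fun x y z h1 h2 => h1.trans h2⟩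
  intro x hx
  rcases transGen_add_aux R hR.2 u v x x hx with h | ⟨h1, h2⟩
  · exact hR.1 x h
  · rcases h1 with h1 | h1 <;> rcases h2 with h2 | h2
    · exact huv (h1.symm.trans h2)
    · exact hvu (h1 ▸ h2)
    · exact hvu (h2 ▸ h1)
    · exact hvu (hR.2 h2 h1)

theorem mdStep_aux {B : Type} {n : ℕ} (P : Fin n → Pref B) (hP : ∀ i, IsPref (P i))
    (p : B × B) (hp : p.1 ≠ p.2) (i : Fin n) :
    IsPref (mdStep P p i) ∧ ∀ x y, P i x y → mdStep P p i x y := by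
  unfold mdStep
  split_ifs with h1 h2
  · exact ⟨hP i, fun _ _ h => h⟩
  · exact ⟨isPref_add_aux _ (hP i) _ _ hp (fun h => h1 (Or.inr h)),
      fun _ _ h => Relation.TransGen.single (Or.inl h)⟩
  · exact ⟨isPref_add_aux _ (hP i) _ _ hp.symm (fun h => h1 (Or.inl h)),
      fun _ _ h => Relation.TransGen.single (Or.inl h)⟩

theorem md_aux {B : Type} {n : ℕ} (σ : List (B × B)) (hσ : ∀ p ∈ σ, p.1 ≠ p.2)
    (P : Fin n → Pref B) (hP : ∀ i, IsPref (P i)) (i : Fin n) :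
    IsPref (MD σ P i) ∧ ∀ x y, P i x y → MD σ P i x y := by
  induction σ generalizing P with
  | nil => exact ⟨hP i, fun _ _ h => h⟩
  | cons p σ ih =>
    have hs := mdStep_aux P hP p (hσ p (by simp))
    have h := ih (fun q hq => hσ q (by simp [hq])) (mdStep P p) (fun j => (hs j).1)
    exact ⟨h.1, fun x y hxy => h.2 x y ((hs i).2 x y hxy)⟩

/-- A majority dominated alternative cannot become the MajDom-consensus
alternative (recall the model fixes `m ≥ 3` alternatives). -/
theorem stmt_11 (hA : 3 ≤ Fintype.card A) {n : ℕ}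
    (P : Fin n → Pref A) (hP : ∀ i, IsPref (P i))
    (a : A) (ha : n < 2 * domdCount P a)
    (σ : List (A × A)) (hσ : IsUpdateOrder σ) :
    ¬ MajDomConsensus (MD σ P) a := by
  intro hc
  have hcard : 1 < Fintype.card A := by omega
  obtain ⟨b, hb⟩ := Fintype.exists_ne_of_one_lt_card hcard a
  unfold MajDomConsensus domCount at hc
  unfold domdCount at ha
  have hdisj : Disjoint (Finset.univ.filter fun i => Dominant (MD σ P i) a)
      (Finset.univ.filter fun i => DominatedIn (P i) a) := by
    rw [Finset.disjoint_left]
    intro i h1 h2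
    have h1' := (Finset.mem_filter.1 h1).2 b hb
    have h2' := (Finset.mem_filter.1 h2).2 b hb
    have h := md_aux σ hσ.1 P hP i
    exact h.1.1 a (h.1.2 h1' (h.2 _ _ h2'))
  have h := Finset.card_le_univ ((Finset.univ.filter fun i => Dominant (MD σ P i) a) ∪
      (Finset.univ.filter fun i => DominatedIn (P i) a))
  rw [Finset.card_union_of_disjoint hdisj, Fintype.card_fin] at h
  omega

end
end

section
/- A unanimity dominated alternative cannot become the unanimity dominant alternative: if alternative a is dominated in the preferences of all agents in a profile P, then for no update order σ is a the UnanDom-consensus alternative of MD_σ(P). -/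
attribute [local instance] Classical.propDecidable

noncomputable section

variable {A : Type} [Fintype A] [DecidableEq A]

theorem aux_irrefl {A : Type} (R : Pref A) (hR : IsPref R) (u v : A) (huv : u ≠ v)
    (h : ¬ R v u) :
    IsPref (Relation.TransGen (fun x y => R x y ∨ (x = u ∧ y = v))) := by
  obtain ⟨hi, ht⟩ := hR
  have key : ∀ x y, Relation.TransGen (fun x y => R x y ∨ (x = u ∧ y = v)) x y →
      R x y ∨ ((x = u ∨ R x u) ∧ (y = v ∨ R v y)) := by
    intro x y hxy
    induction hxy with
    | single h1 =>
      rcases h1 with h1 | ⟨rfl, rfl⟩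
      · exact Or.inl h1
      · exact Or.inr ⟨Or.inl rfl, Or.inl rfl⟩
    | tail _ h1 ih =>
      rcases h1 with h1 | ⟨rfl, rfl⟩
      · rcases ih with ih | ⟨ih1, rfl | ih2⟩
        · exact Or.inl (ht ih h1)
        · exact Or.inr ⟨ih1, Or.inr h1⟩
        · exact Or.inr ⟨ih1, Or.inr (ht ih2 h1)⟩
      · rcases ih with ih | ⟨ih1, _⟩
        · exact Or.inr ⟨Or.inr ih, Or.inl rfl⟩
        · exact Or.inr ⟨ih1, Or.inl rfl⟩
  have irr : ∀ x, ¬ R x x := fun x hx => by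
    first
    | exact hi x hx
    | exact hi.irrefl x hx
  have irr2 : ∀ x, ¬ Relation.TransGen (fun x y => R x y ∨ (x = u ∧ y = v)) x x := by
    intro x hx
    rcases key x x hx with h1 | ⟨h1 | h1, h2 | h2⟩
    · exact irr x h1
    · exact huv (h1.symm.trans h2)
    · exact h (h1 ▸ h2)
    · exact h (h2 ▸ h1)
    · exact h (ht h2 h1)
  refine ⟨?_, fun x y z h1 h2 => h1.trans h2⟩
  first
  | exact irr2
  | exact ⟨irr2⟩

theorem aux_MD {A : Type} {n : ℕ} (a b : A) (σ : List (A × A))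
    (hσ : ∀ p ∈ σ, p.1 ≠ p.2) :
    ∀ P : Fin n → Pref A, (∀ i, IsPref (P i)) → (∀ i, P i b a) →
      (∀ i, IsPref (MD σ P i)) ∧ ∀ i, MD σ P i b a := by
  induction σ with
  | nil => exact fun P h1 h2 => ⟨h1, h2⟩
  | cons p σ ih =>
    intro P h1 h2
    have hp : p.1 ≠ p.2 := hσ p (by simp)
    have hstep : ∀ i, IsPref (mdStep P p i) ∧ mdStep P p i b a := by
      intro i
      unfold mdStep
      split_ifs with c1 c2
      · exact ⟨h1 i, h2 i⟩
      · exact ⟨aux_irrefl _ (h1 i) _ _ hp (fun h => c1 (Or.inr h)), .single (Or.inl (h2 i))⟩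
      · exact ⟨aux_irrefl _ (h1 i) _ _ hp.symm (fun h => c1 (Or.inl h)), .single (Or.inl (h2 i))⟩
    exact ih (fun q hq => hσ q (by simp [hq])) (mdStep P p)
      (fun i => (hstep i).1) (fun i => (hstep i).2)

/-- A unanimity dominated alternative cannot become the UnanDom-consensus
alternative (recall the model fixes `m ≥ 3` alternatives and `N = {1, …, n}` nonempty). -/
theorem stmt_12 (hA : 3 ≤ Fintype.card A) {n : ℕ} (hn : 0 < n)
    (P : Fin n → Pref A) (hP : ∀ i, IsPref (P i))
    (a : A) (ha : ∀ i, DominatedIn (P i) a)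
    (σ : List (A × A)) (hσ : IsUpdateOrder σ) :
    ¬ UnanDomConsensus (MD σ P) a := by
  intro hU
  have : Nontrivial A := Fintype.one_lt_card_iff_nontrivial.mp (by omega)
  obtain ⟨b, hb⟩ := exists_ne a
  obtain ⟨h1, h2⟩ := aux_MD a b σ hσ.1 P hP (fun i => ha i b hb)
  have h3 := (h1 ⟨0, hn⟩).2 (hU ⟨0, hn⟩ b hb) (h2 ⟨0, hn⟩)
  have h4 := (h1 ⟨0, hn⟩).1
  first
  | exact h4 a h3
  | exact h4.irrefl a h3

end
end

section
/- For profiles of strict weak orderings, majority dynamics preserves Condorcet-winner identity: if every preference in a profile P is a strict weak ordering and a is the Condorcet winner of P, then for every update order σ, a is the Condorcet winner of MD_σ(P). -/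
attribute [local instance] Classical.propDecidable

noncomputable section

variable {A : Type} [Fintype A] [DecidableEq A]

/-- Invariant kept by the dynamics. -/
def CWInv {n : ℕ} (P Q : Fin n → Pref A) (a : A) : Prop :=
  ∀ i, (∀ x y, P i x y → Q i x y) ∧ Transitive (Q i) ∧ (∀ b, Q i b a → P i b a)

theorem cwInv_winner {n : ℕ} {P Q : Fin n → Pref A} {a : A} (ha : CondorcetWinner P a)
    (h : CWInv P Q a) : CondorcetWinner Q a := by
  intro b hb
  have h1 : support Q b a ≤ support P b a := by
    unfold support
    apply Finset.card_le_card
    intro i hi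
    simp only [Finset.mem_filter, Finset.mem_univ, true_and] at hi ⊢
    exact (h i).2.2 b hi
  have h2 : support P a b ≤ support Q a b := by
    unfold support
    apply Finset.card_le_card
    intro i hi
    simp only [Finset.mem_filter, Finset.mem_univ, true_and] at hi ⊢
    exact (h i).1 _ _ hi
  have := ha b hb
  omega

theorem cwInv_add {P Q : Pref A} {a x y : A} (hs : IsSWO P)
    (h1 : ∀ x y, P x y → Q x y) (h2 : Transitive Q) (h3 : ∀ b, Q b a → P b a)
    (hxy : ¬ Q x y) (hyx : ¬ Q y x) (hya : y ≠ a) (b : A)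
    (hb : Relation.TransGen (fun u v => Q u v ∨ (u = x ∧ v = y)) b a) : P b a := by
  obtain ⟨k, f, hf⟩ := hs
  induction hb using Relation.TransGen.head_induction_on with
  | single h =>
    rcases h with h | ⟨_, h⟩
    · exact h3 _ h
    · exact absurd h.symm hya
  | head h _ ih =>
    rcases h with h | ⟨rfl, rfl⟩
    · exact h3 _ (h2 h (h1 _ _ ih))
    · have e1 := fun h => hxy (h1 _ _ ((hf _ _).2 h))
      have e2 := fun h => hyx (h1 _ _ ((hf _ _).2 h))
      rw [hf] at ih ⊢
      exact lt_of_le_of_lt (not_lt.1 e2) ih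

theorem cwInv_step {n : ℕ} {P Q : Fin n → Pref A} {a : A} (hs : ∀ i, IsSWO (P i))
    (ha : CondorcetWinner P a) (h : CWInv P Q a) (p : A × A) (hp : p.1 ≠ p.2) :
    CWInv P (mdStep Q p) a := by
  have hw := cwInv_winner ha h
  intro i
  obtain ⟨h1, h2, h3⟩ := h i
  unfold mdStep
  split_ifs with c1 c2
  · exact ⟨h1, h2, h3⟩
  · rw [not_or] at c1
    refine ⟨fun x y hxy => .single (Or.inl (h1 _ _ hxy)), fun _ _ _ => .trans,
      cwInv_add (hs i) h1 h2 h3 c1.1 c1.2 ?_⟩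
    intro e
    have := hw p.1 (e ▸ hp)
    rw [e] at c2
    omega
  · rw [not_or] at c1
    refine ⟨fun x y hxy => .single (Or.inl (h1 _ _ hxy)), fun _ _ _ => .trans,
      cwInv_add (hs i) h1 h2 h3 c1.2 c1.1 ?_⟩
    intro e
    have := hw p.2 (e ▸ hp.symm)
    rw [e] at c2
    omega

theorem cwInv_fold {n : ℕ} {P : Fin n → Pref A} {a : A} (hs : ∀ i, IsSWO (P i))
    (ha : CondorcetWinner P a) (σ : List (A × A)) : ∀ Q : Fin n → Pref A, CWInv P Q a →
    (∀ p ∈ σ, p.1 ≠ p.2) → CWInv P (σ.foldl mdStep Q) a := by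
  induction σ with
  | nil => intro Q h _; exact h
  | cons p σ ih =>
    intro Q h hp
    exact ih _ (cwInv_step hs ha h p (hp p (by simp))) (fun q hq => hp q (by simp [hq]))

/-- For profiles of strict weak orderings, majority dynamics preserves
Condorcet-winner identity. -/
theorem stmt_13 {n : ℕ} (P : Fin n → Pref A) (hP : ∀ i, IsPref (P i))
    (hswo : ∀ i, IsSWO (P i))
    (a : A) (ha : CondorcetWinner P a)
    (σ : List (A × A)) (hσ : IsUpdateOrder σ) :
    CondorcetWinner (MD σ P) a := by
  exact cwInv_winner ha (cwInv_fold hswo ha σ P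
    (fun i => ⟨fun _ _ h => h, (hP i).2, fun _ h => h⟩) hσ.1)

end
end

section
/- For profiles of strict weak orderings, majority dynamics preserves UnanUD-consensus identity: if every preference in a profile P is a strict weak ordering and a is the UnanUD-consensus alternative of P, then for every update order σ, a is the UnanUD-consensus alternative of MD_σ(P). -/
attribute [local instance] Classical.propDecidable

noncomputable section

variable {A : Type} [Fintype A] [DecidableEq A]

/-- The invariant preserved along the dynamics. -/
def UDInv {n : ℕ} (P : Fin n → Pref A) (a : A) : Prop :=
  (∀ i, Undominated (P i) a) ∧ ∀ b, b ≠ a → ∃ i, P i a b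

theorem udInv_transGen {r : Pref A} {a c d : A} (h : Undominated r a) (hd : a ≠ d) :
    Undominated (Relation.TransGen (fun x y => r x y ∨ (x = c ∧ y = d))) a := by
  intro b hb
  rcases (Relation.TransGen.tail'_iff.mp hb) with ⟨y, -, hy⟩
  rcases hy with hy | hy
  · exact h y hy
  · exact hd hy.2

theorem udInv_step {n : ℕ} (P : Fin n → Pref A) (a : A) (p : A × A) (hp : p.1 ≠ p.2)
    (h : UDInv P a) : UDInv (mdStep P p) a := by
  obtain ⟨h1, h2⟩ := h
  have h0 : ∀ b, support P b a = 0 := by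
    intro b
    unfold support
    rw [Finset.card_eq_zero, Finset.filter_eq_empty_iff]
    intro i _
    exact h1 i b
  have hpos : ∀ b, b ≠ a → 0 < support P a b := by
    intro b hb
    obtain ⟨i, hi⟩ := h2 b hb
    unfold support
    exact Finset.card_pos.mpr ⟨i, Finset.mem_filter.mpr ⟨Finset.mem_univ i, hi⟩⟩
  refine ⟨?_, ?_⟩
  · intro i
    unfold mdStep
    split_ifs with c1 c2
    · exact h1 i
    · refine udInv_transGen (h1 i) ?_
      intro e
      have hq := hpos p.1 (by rw [e]; exact hp)
      have hz := h0 p.1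
      rw [← e] at c2
      omega
    · refine udInv_transGen (h1 i) ?_
      intro e
      have hz := h0 p.2
      rw [← e] at c2
      omega
  · intro b hb
    obtain ⟨i, hi⟩ := h2 b hb
    refine ⟨i, ?_⟩
    unfold mdStep
    split_ifs with c1 c2
    · exact hi
    · exact Relation.TransGen.single (Or.inl hi)
    · exact Relation.TransGen.single (Or.inl hi)

theorem udInv_MD {n : ℕ} (a : A) (σ : List (A × A)) :
    ∀ P : Fin n → Pref A, (∀ p ∈ σ, p.1 ≠ p.2) → UDInv P a → UDInv (MD σ P) a := by
  induction σ with
  | nil => intro P _ h; exact h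
  | cons p σ ih =>
    intro P hp h
    exact ih (mdStep P p) (fun q hq => hp q (List.mem_cons_of_mem _ hq))
      (udInv_step P a p (hp p List.mem_cons_self) h)

/-- For profiles of strict weak orderings, majority dynamics preserves
UnanUD-consensus identity. -/
theorem stmt_14 {n : ℕ} (P : Fin n → Pref A) (hP : ∀ i, IsPref (P i))
    (hswo : ∀ i, IsSWO (P i))
    (a : A) (ha : UnanUDConsensus P a)
    (σ : List (A × A)) (hσ : IsUpdateOrder σ) :
    UnanUDConsensus (MD σ P) a := by
  have hinv : UDInv P a := by
    refine ⟨ha.1, ?_⟩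
    intro b hb
    have hnot : ¬ ∀ i, Undominated (P i) b := fun h => hb (ha.2 b h)
    rw [not_forall] at hnot
    obtain ⟨i, hi⟩ := hnot
    unfold Undominated at hi
    rw [not_forall] at hi
    obtain ⟨c, hc⟩ := hi
    rw [not_not] at hc
    refine ⟨i, ?_⟩
    obtain ⟨k, f, hf⟩ := hswo i
    have hac := ha.1 i c
    rw [hf] at hac hc ⊢
    exact lt_of_le_of_lt (not_lt.mp hac) hc
  obtain ⟨h1, h2⟩ := udInv_MD a σ P hσ.1 hinv
  refine ⟨h1, ?_⟩
  intro b hb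
  by_contra hne
  obtain ⟨i, hi⟩ := h2 b hne
  exact hb i a hi

end
end

section
/- Majority dynamics enables positive Condorcet-winner identity control: for every profile P whose Condorcet winner is a, there exists an update order σ such that a is the Condorcet winner of MD_σ(P). -/
attribute [local instance] Classical.propDecidable

noncomputable section

variable {A : Type} [Fintype A] [DecidableEq A]

theorem tg_of {R : Pref A} (hR : IsPref R) {u v : A} {x y : A}
    (h : Relation.TransGen (fun x y => R x y ∨ (x = u ∧ y = v)) x y) :
    R x y ∨ ((x = u ∨ R x u) ∧ (y = v ∨ R v y)) := by
  have hT : ∀ a b c, R a b → R b c → R a c := fun a b c h1 h2 => hR.2 h1 h2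
  induction h with
  | single h => rcases h with h | ⟨rfl, rfl⟩ <;> simp_all
  | tail _ h ih =>
    rcases h with h | ⟨rfl, rfl⟩
    · rcases ih with ih | ⟨h1, h2⟩
      · exact Or.inl (hT _ _ _ ih h)
      · refine Or.inr ⟨h1, Or.inr ?_⟩
        rcases h2 with rfl | h2
        · exact h
        · exact hT _ _ _ h2 h
    · refine Or.inr ⟨?_, Or.inl rfl⟩
      rcases ih with ih | ⟨h1, h2⟩
      · exact Or.inr ih
      · exact h1

theorem tg_isPref {R : Pref A} (hR : IsPref R) {u v : A} (huv : u ≠ v) (hn : ¬ R v u) :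
    IsPref (Relation.TransGen (fun x y => R x y ∨ (x = u ∧ y = v))) := by
  refine ⟨fun x hx => ?_, fun x y z h1 h2 => h1.trans h2⟩
  rcases tg_of hR hx with h | ⟨h1, h2⟩
  · exact hR.1 x h
  · rcases h1 with rfl | h1 <;> rcases h2 with rfl | h2
    · exact huv rfl
    · exact hn h2
    · exact hn h1
    · exact hn (hR.2 h2 h1)

theorem mdStep_isPref {n : ℕ} {P : Fin n → Pref A} (hP : ∀ i, IsPref (P i)) {p : A × A}
    (hp : p.1 ≠ p.2) (i : Fin n) : IsPref (mdStep P p i) := by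
  unfold mdStep
  split_ifs with h1 h2
  · exact hP i
  · exact tg_isPref (hP i) hp (fun h => h1 (Or.inr h))
  · exact tg_isPref (hP i) hp.symm (fun h => h1 (Or.inl h))

theorem mdStep_mono {n : ℕ} {P : Fin n → Pref A} {p : A × A} (i : Fin n) {x y : A}
    (h : P i x y) : mdStep P p i x y := by
  unfold mdStep
  split_ifs with h1 h2
  · exact h
  · exact .single (Or.inl h)
  · exact .single (Or.inl h)

theorem cw_mono {n : ℕ} {P Q : Fin n → Pref A} {a : A} (ha : CondorcetWinner P a)
    (h1 : ∀ i b, P i a b → Q i a b) (h2 : ∀ i b, Q i b a → P i b a) :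
    CondorcetWinner Q a := by
  intro b hb
  have := ha b hb
  unfold support at *
  refine lt_of_le_of_lt (Finset.card_le_card ?_) (this.trans_le (Finset.card_le_card ?_))
  · intro i; simpa using h2 i b
  · intro i; simpa using h1 i b

theorem phase1 {n : ℕ} (a : A) (l : List (A × A)) : ∀ (P : Fin n → Pref A),
    (∀ i, IsPref (P i)) → CondorcetWinner P a → (∀ p ∈ l, p.1 = a ∧ p.2 ≠ a) →
    (∀ i, IsPref (MD l P i)) ∧ CondorcetWinner (MD l P) a ∧
    (∀ i x y, P i x y → MD l P i x y) ∧
    (∀ p ∈ l, ∀ i, MD l P i a p.2 ∨ MD l P i p.2 a) := by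
  induction l with
  | nil => intro P hP ha _; simpa [MD] using ⟨hP, ha⟩
  | cons p l ih =>
    intro P hP ha hl
    obtain ⟨u, b⟩ := p
    obtain ⟨hu, hb⟩ := hl (u, b) (by simp)
    simp only at hu hb
    subst hu
    have hlt := (ha b hb).le
    have hcw : CondorcetWinner (mdStep P (u, b)) u := by
      refine cw_mono ha (fun i b h => mdStep_mono i h) ?_
      intro i c h
      unfold mdStep at h
      simp only [hlt, if_true] at h
      split_ifs at h with h1
      · exact h
      · rcases tg_of (hP i) h with h | ⟨_, h3⟩
        · exact h
        · rcases h3 with h3 | h3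
          · exact absurd h3.symm hb
          · exact absurd (Or.inr h3) h1
    have hc : ∀ i, mdStep P (u, b) i u b ∨ mdStep P (u, b) i b u := by
      intro i
      unfold mdStep
      simp only [hlt, if_true]
      split_ifs with h1
      · exact h1
      · exact Or.inl (.single (Or.inr ⟨rfl, rfl⟩))
    obtain ⟨g1, g2, g3, g4⟩ := ih (mdStep P (u, b))
      (mdStep_isPref hP (Ne.symm hb)) hcw (fun p hp => hl p (by simp [hp]))
    refine ⟨g1, g2, fun i x y h => g3 i x y (mdStep_mono i h), ?_⟩
    intro p hp i
    rcases List.mem_cons.1 hp with rfl | hp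
    · exact (hc i).imp (g3 i _ _) (g3 i _ _)
    · exact g4 p hp i

theorem phase2 {n : ℕ} (l : List (A × A)) : ∀ (P : Fin n → Pref A),
    (∀ i, IsPref (P i)) → (∀ p ∈ l, p.1 ≠ p.2) →
    (∀ i, IsPref (MD l P i)) ∧ (∀ i x y, P i x y → MD l P i x y) := by
  induction l with
  | nil => intro P hP _; simpa [MD] using hP
  | cons p l ih =>
    intro P hP hl
    obtain ⟨g1, g2⟩ := ih (mdStep P p)
      (mdStep_isPref hP (hl p (by simp))) (fun p hp => hl p (by simp [hp]))
    exact ⟨g1, fun i x y h => g2 i x y (mdStep_mono i h)⟩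

/-- Majority dynamics enables positive Condorcet-winner identity control. -/
theorem stmt_15 {n : ℕ} (P : Fin n → Pref A) (hP : ∀ i, IsPref (P i))
    (a : A) (ha : CondorcetWinner P a) :
    ∃ σ : List (A × A), IsUpdateOrder σ ∧ CondorcetWinner (MD σ P) a := by
  let e := Fintype.equivFin A
  let S1 : Finset (A × A) := Finset.univ.filter fun p => p.1 = a ∧ p.2 ≠ a
  let S2 : Finset (A × A) := Finset.univ.filter fun p => p.1 ≠ a ∧ p.2 ≠ a ∧ e p.1 < e p.2
  have m1 : ∀ p, p ∈ S1.toList ↔ p.1 = a ∧ p.2 ≠ a := by intro p; simp [S1]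
  have m2 : ∀ p, p ∈ S2.toList ↔ p.1 ≠ a ∧ p.2 ≠ a ∧ e p.1 < e p.2 := by intro p; simp [S2]
  have n2 : ∀ p ∈ S2.toList, p.1 ≠ p.2 := by
    intro p hp h
    have := ((m2 p).1 hp).2.2
    rw [h] at this
    exact lt_irrefl _ this
  refine ⟨S1.toList ++ S2.toList, ⟨?_, ?_⟩, ?_⟩
  · intro p hp
    rcases List.mem_append.1 hp with hp | hp
    · obtain ⟨h1, h2⟩ := (m1 p).1 hp
      rw [h1]; exact h2.symm
    · exact n2 p hp
  · intro x y hxy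
    rw [List.count_append, List.count_append, S1.nodup_toList.count, S1.nodup_toList.count,
      S2.nodup_toList.count, S2.nodup_toList.count]
    simp only [m1, m2]
    by_cases hx : x = a
    · have hy : y ≠ a := fun h => hxy (hx.trans h.symm)
      simp [hx, hy]
    · by_cases hy : y = a
      · simp [hx, hy]
      · rcases lt_or_gt_of_ne (fun h => hxy (e.injective h)) with h | h
        · simp [hx, hy, h, h.le, not_lt.2 h.le]
        · simp [hx, hy, h, h.le, not_lt.2 h.le]
  · obtain ⟨g1, g2, g3, g4⟩ := phase1 a S1.toList P hP ha (fun p hp => (m1 p).1 hp)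
    obtain ⟨k1, k2⟩ := phase2 S2.toList _ g1 n2
    have : MD (S1.toList ++ S2.toList) P = MD S2.toList (MD S1.toList P) := by
      simp [MD, List.foldl_append]
    rw [this]
    refine cw_mono g2 (fun i b h => k2 i _ _ h) ?_
    intro i b h
    have hb : b ≠ a := by
      rintro rfl
      exact (k1 i).1 _ h
    rcases g4 (a, b) ((m1 _).2 ⟨rfl, hb⟩) i with h' | h'
    · exact absurd ((k1 i).2 h (k2 i _ _ h')) ((k1 i).1 b)
    · exact h'

end
end

section
/- Majority dynamics does not enable positive PlurDom-consensus existence control: there exists a profile P (over at least 3 alternatives) that has a PlurDom-consensus alternative such that for every update order σ, MD_σ(P) has no PlurDom-consensus alternative. -/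
attribute [local instance] Classical.propDecidable

noncomputable section

variable {A : Type} [Fintype A] [DecidableEq A]

/-- Profile given by rank functions. -/
def prof (r : Fin 8 → Fin 3 → ℕ) : Fin 8 → Pref (Fin 3) := fun i a b => r i a < r i b

/-- Initial ranks. -/
def rP : Fin 8 → Fin 3 → ℕ :=
  ![![0,1,2], ![0,1,2], ![0,1,2], ![1,0,2], ![1,0,2], ![2,1,0], ![2,1,0], ![0,0,2]]

/-- Final ranks. -/
def rQ : Fin 8 → Fin 3 → ℕ :=
  ![![0,1,2], ![0,1,2], ![0,1,2], ![1,0,2], ![1,0,2], ![2,1,0], ![2,1,0], ![1,0,2]]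

theorem support_prof (r : Fin 8 → Fin 3 → ℕ) (a b : Fin 3) :
    support (prof r) a b =
      (@Finset.filter _ (fun i => r i a < r i b) (fun i => Nat.decLt _ _) Finset.univ).card := by
  unfold support prof
  congr

theorem domCount_prof (r : Fin 8 → Fin 3 → ℕ) (a : Fin 3) :
    domCount (prof r) a =
      (@Finset.filter _ (fun i => ∀ b, b ≠ a → r i a < r i b)
        (fun i => Nat.decidableForallFin _) Finset.univ).card := by
  unfold domCount prof Dominant
  congr

theorem rQ_total : ∀ (i : Fin 8) (a b : Fin 3), a ≠ b → rQ i a < rQ i b ∨ rQ i b < rQ i a := by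
  decide

theorem rP_total : ∀ (i : Fin 8) (a b : Fin 3), a ≠ b →
    ¬ ((a = 0 ∧ b = 1) ∨ (a = 1 ∧ b = 0)) → rP i a < rP i b ∨ rP i b < rP i a := by
  decide

theorem rP_total' : ∀ (i : Fin 8), i ≠ 7 → ∀ a b : Fin 3, a ≠ b →
    rP i a < rP i b ∨ rP i b < rP i a := by
  decide

theorem rPQ : ∀ (i : Fin 8), i ≠ 7 → rP i = rQ i := by
  decide

theorem step_Q (p : Fin 3 × Fin 3) (hp : p.1 ≠ p.2) : mdStep (prof rQ) p = prof rQ := by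
  funext i
  have := rQ_total i p.1 p.2 hp
  unfold mdStep
  exact if_pos this

theorem step_P (p : Fin 3 × Fin 3) (hp : p.1 ≠ p.2) (h : p ≠ (0, 1)) (h' : p ≠ (1, 0)) :
    mdStep (prof rP) p = prof rP := by
  funext i
  have := rP_total i p.1 p.2 hp (by
    rintro (⟨h1, h2⟩ | ⟨h1, h2⟩)
    · exact h (Prod.ext h1 h2)
    · exact h' (Prod.ext h1 h2))
  unfold mdStep
  exact if_pos this

theorem trans_eq :
    Relation.TransGen (fun x y => prof rP 7 x y ∨ (x = 1 ∧ y = 0)) = prof rQ 7 := by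
  have h1 : ∀ x y : Fin 3, (rP 7 x < rP 7 y ∨ (x = 1 ∧ y = 0)) ↔ rQ 7 x < rQ 7 y := by decide
  funext x y
  apply propext
  constructor
  · intro h
    induction h with
    | single h => exact (h1 _ _).1 h
    | tail _ h ih => exact lt_trans ih ((h1 _ _).1 h)
  · intro h
    exact Relation.TransGen.single ((h1 _ _).2 h)

theorem step_P01 : mdStep (prof rP) (0, 1) = prof rQ := by
  funext i
  unfold mdStep
  by_cases hi : i = 7
  · subst hi
    refine (if_neg (show ¬ (rP 7 0 < rP 7 1 ∨ rP 7 1 < rP 7 0) by decide)).trans ((if_neg ?_).trans trans_eq)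
    · rw [support_prof, support_prof]
      decide
  · refine (if_pos (rP_total' i hi 0 1 (by decide))).trans ?_
    unfold prof
    rw [rPQ i hi]

theorem step_P10 : mdStep (prof rP) (1, 0) = prof rQ := by
  funext i
  unfold mdStep
  by_cases hi : i = 7
  · subst hi
    refine (if_neg (show ¬ (rP 7 1 < rP 7 0 ∨ rP 7 0 < rP 7 1) by decide)).trans ((if_pos ?_).trans trans_eq)
    · rw [support_prof, support_prof]
      decide
  · refine (if_pos (rP_total' i hi 1 0 (by decide))).trans ?_
    unfold prof
    rw [rPQ i hi]

theorem MD_Q (σ : List (Fin 3 × Fin 3)) (h : ∀ p ∈ σ, p.1 ≠ p.2) :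
    MD σ (prof rQ) = prof rQ := by
  induction σ with
  | nil => rfl
  | cons p σ ih =>
    have h2 := ih (fun q hq => h q (List.mem_cons_of_mem _ hq))
    unfold MD at h2 ⊢
    rw [List.foldl_cons, step_Q p (h p List.mem_cons_self), h2]

theorem MD_P (σ : List (Fin 3 × Fin 3)) (h : ∀ p ∈ σ, p.1 ≠ p.2)
    (hm : (0, 1) ∈ σ ∨ (1, 0) ∈ σ) : MD σ (prof rP) = prof rQ := by
  induction σ with
  | nil => simp at hm
  | cons p σ ih =>
    have hσ : ∀ q ∈ σ, q.1 ≠ q.2 := fun q hq => h q (List.mem_cons_of_mem _ hq)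
    have hQ := MD_Q σ hσ
    unfold MD at hQ ih ⊢
    rw [List.foldl_cons]
    by_cases h1 : p = (0, 1)
    · rw [h1, step_P01, hQ]
    by_cases h2 : p = (1, 0)
    · rw [h2, step_P10, hQ]
    rw [step_P p (h p List.mem_cons_self) h1 h2]
    apply ih hσ
    rcases hm with hm | hm
    · exact Or.inl ((List.mem_cons.1 hm).resolve_left (Ne.symm h1))
    · exact Or.inr ((List.mem_cons.1 hm).resolve_left (Ne.symm h2))

/-- Majority dynamics does not enable positive PlurDom-consensus
existence control. -/
theorem stmt_17 :
    ∃ (m n : ℕ) (P : Fin n → Pref (Fin m)) (a : Fin m),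
      3 ≤ m ∧ (∀ i, IsPref (P i)) ∧ PlurDomConsensus P a ∧
      ∀ σ : List (Fin m × Fin m), IsUpdateOrder σ →
        ∀ b, ¬ PlurDomConsensus (MD σ P) b := by
  refine ⟨3, 8, prof rP, 0, le_refl _, ?_, ?_, ?_⟩
  · intro i
    exact ⟨fun a => lt_irrefl _, fun a b c h1 h2 => lt_trans h1 h2⟩
  · unfold PlurDomConsensus PlurDomTop
    simp only [domCount_prof]
    decide
  · intro σ hσ b hb
    have hm : (0, 1) ∈ σ ∨ (1, 0) ∈ σ := by
      have := hσ.2 0 1 (by decide)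
      by_contra hc
      rw [not_or] at hc
      rw [List.count_eq_zero_of_not_mem hc.1, List.count_eq_zero_of_not_mem hc.2] at this
      omega
    rw [MD_P σ hσ.1 hm] at hb
    revert b
    unfold PlurDomConsensus PlurDomTop
    simp only [domCount_prof]
    decide

end
end
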